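/- (Schwarz-type lemma.) Let F : [B(H)^n]_1 → [B(H)^m]_1 be a free holomorphic map. Then: (i) the map φ(X_1,...,X_n) := [X_1,...,X_n]F'(0)^t maps [B(H)^n]_1 into [B(H)^m]_1, where ^t denotes the transpose; in particular ‖F'(0)‖ ≤ 1; (ii) if F(0)=0, then ‖F(X)‖ ≤ ‖X‖ for every X ∈ [B(H)^n]_1. Moreover, if m=n, F : [B(H)^n]_1 → [B(H)^n]_1 is free holomorphic and F'(0) is a unitary operator on ℂ^n, then F is a free holomorphic automorphism of [B(H)^n]_1 and F(X) = [X_1,...,X_n][F'(0)]^t for all X ∈ [B(H)^n]_1. -/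

import Mathlib

noncomputable section

open Filter

namespace NC

variable {H : Type*} [NormedAddCommGroup H] [InnerProductSpace ℂ H] [CompleteSpace H]

/-- The product `X_α = X_{i₁} ⋯ X_{i_k}` for a word `α = g_{i₁} ⋯ g_{i_k}`. -/
def wordProd {n : ℕ} (X : Fin n → H →L[ℂ] H) (w : List (Fin n)) : H →L[ℂ] H :=
  (w.map X).prod

/-- The row norm `‖X₁X₁^* + ⋯ + XₙXₙ^*‖^{1/2}` of a tuple. -/
def rowNorm {n : ℕ} (X : Fin n → H →L[ℂ] H) : ℝ :=
  Real.sqrt ‖∑ i, X i * ContinuousLinearMap.adjoint (X i)‖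

/-- The open operatorial ball `[B(H)ⁿ]_γ`. -/
def ball (n : ℕ) (H : Type*) [NormedAddCommGroup H] [InnerProductSpace ℂ H]
    [CompleteSpace H] (γ : ℝ) : Set (Fin n → H →L[ℂ] H) :=
  {X | rowNorm X < γ}

/-- The closed operatorial ball `[B(H)ⁿ]_γ⁻`. -/
def cball (n : ℕ) (H : Type*) [NormedAddCommGroup H] [InnerProductSpace ℂ H]
    [CompleteSpace H] (γ : ℝ) : Set (Fin n → H →L[ℂ] H) :=
  {X | rowNorm X ≤ γ}

/-- The homogeneous part of degree `k` of the power series with coefficients `a`,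
evaluated at `X`:  `∑_{|α|=k} a_α X_α`. -/
def homog {n : ℕ} (a : List (Fin n) → ℂ) (X : Fin n → H →L[ℂ] H) (k : ℕ) :
    H →L[ℂ] H :=
  ∑ w : Fin k → Fin n, a (List.ofFn w) • wordProd X (List.ofFn w)

/-- `RepOn γ a F` means that the free power series with coefficients `a` converges in
operator norm to `F X` at every point `X` of the open ball `[B(H)ⁿ]_γ`; i.e. `F` is the
free holomorphic function with coefficients `a` on `[B(H)ⁿ]_γ`. -/
def RepOn {n : ℕ} (γ : ℝ) (a : List (Fin n) → ℂ)
    (F : (Fin n → H →L[ℂ] H) → H →L[ℂ] H) : Prop :=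
  ∀ X ∈ ball n H γ,
    Tendsto (fun N => ∑ k ∈ Finset.range N, homog a X k) atTop (nhds (F X))

/-- `F` is a free holomorphic function (with scalar coefficients) on `[B(H)ⁿ]_γ`. -/
def IsFreeHolo {n : ℕ} (γ : ℝ) (F : (Fin n → H →L[ℂ] H) → H →L[ℂ] H) : Prop :=
  ∃ a, RepOn γ a F

/-- `F` is a free holomorphic map `[B(H)ⁿ]_γ → B(H)^m`. -/
def IsFreeHoloMap {n m : ℕ} (γ : ℝ)
    (F : (Fin n → H →L[ℂ] H) → Fin m → H →L[ℂ] H) : Prop :=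
  ∀ i, IsFreeHolo γ fun X => F X i

/-- `Ψ` is a free holomorphic automorphism of `[B(H)ⁿ]_γ`: a free holomorphic map of the
ball to itself admitting a free holomorphic inverse. -/
def IsFreeAut {n : ℕ} (γ : ℝ) (Ψ : (Fin n → H →L[ℂ] H) → Fin n → H →L[ℂ] H) : Prop :=
  IsFreeHoloMap γ Ψ ∧ Set.MapsTo Ψ (ball n H γ) (ball n H γ) ∧
    ∃ Φ, IsFreeHoloMap γ Φ ∧ Set.MapsTo Φ (ball n H γ) (ball n H γ) ∧
      (∀ X ∈ ball n H γ, Φ (Ψ X) = X) ∧ ∀ X ∈ ball n H γ, Ψ (Φ X) = X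

end NC

/-!
The row norm of a tuple is the operator norm of the row operator `[X₁,…,Xₙ]`, so `F` becomes a
holomorphic map between the open unit balls of two Banach spaces of row operators, whose derivative
at the origin is the linear substitution by `F'(0)`. Cauchy's estimate on complex lines bounds that
derivative, which is (i); evaluating it on scalar tuples bounds the matrix. Part (ii) is the
classical Schwarz lemma. When `F'(0)` is unitary, the substitution is an isometry, and undoing it
leaves a self-map of the ball whose derivative at the origin is the identity: the Schwarz–Pick
inequality forces it to fix the origin, and averaging its iterates forces it to be the identity.
-/

section BanachSpaces

open Metric Set Topology ComplexConjugate

variable {E F : Type*} [NormedAddCommGroup E] [NormedSpace ℂ E]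
  [NormedAddCommGroup F] [NormedSpace ℂ F]

theorem le_of_forall_mul_pow_le {x C : ℝ} (k : ℕ)
    (h : ∀ r ∈ Ioo (0 : ℝ) 1, x * r ^ k ≤ C) : x ≤ C := by
  have hlim : Tendsto (fun r : ℝ => x * r ^ k) (𝓝[<] 1) (𝓝 x) := by
    have hcont : Continuous fun r : ℝ => x * r ^ k := by fun_prop
    simpa using (hcont.tendsto 1).mono_left nhdsWithin_le_nhds
  exact le_of_tendsto hlim (by filter_upwards [Ioo_mem_nhdsLT zero_lt_one] using h)

theorem exists_norm_le_one_ofReal_norm_smul_eq (x : E) :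
    ∃ u : E, ‖u‖ ≤ 1 ∧ (‖x‖ : ℂ) • u = x := by
  refine ⟨(‖x‖⁻¹ : ℂ) • x, ?_, ?_⟩
  · simpa [norm_smul] using inv_mul_le_one
  · rcases eq_or_ne x 0 with rfl | hx
    · simp
    · rw [smul_inv_smul₀ (by simpa using hx)]

theorem mapsTo_smul_ball {u : E} (hu : ‖u‖ ≤ 1) :
    MapsTo (fun z : ℂ => z • u) (ball 0 1) (ball 0 1) := fun z hz => by
  rw [mem_ball_zero_iff] at hz ⊢
  rw [norm_smul]
  exact (mul_le_of_le_one_right (norm_nonneg z) hu).trans_lt hz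

theorem hasFPowerSeriesOnBall_of_tendsto [CompleteSpace F] {c : ℕ → F} {f : ℂ → F}
    (h : ∀ z : ℂ, ‖z‖ < 1 → Tendsto (fun N => ∑ k ∈ Finset.range N, z ^ k • c k) atTop (𝓝 (f z))) :
    HasFPowerSeriesOnBall f
      (fun k => ContinuousMultilinearMap.mkPiRing ℂ (Fin k) (c k)) 0 1 := by
  set p : FormalMultilinearSeries ℂ ℂ F :=
    fun k => ContinuousMultilinearMap.mkPiRing ℂ (Fin k) (c k) with hp
  have hterm : ∀ z : ℂ, ‖z‖ < 1 → Tendsto (fun k => z ^ k • c k) atTop (𝓝 0) := fun z hz => by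
    simpa [Finset.sum_range_succ] using ((h z hz).comp (tendsto_add_atTop_nat 1)).sub (h z hz)
  have hrad : 1 ≤ p.radius := by
    refine ENNReal.le_of_forall_nnreal_lt fun r hr => p.le_radius_of_tendsto (l := 0) ?_
    have hr1 : ‖((r : ℝ) : ℂ)‖ < 1 := by simpa using hr
    simpa [hp, norm_smul, mul_comm] using (hterm _ hr1).norm
  refine ⟨hrad, one_pos, fun {y} hy => ?_⟩
  have hsum := (p.hasFPowerSeriesOnBall (one_pos.trans_le hrad)).hasSum
    (eball_subset_eball hrad hy)
  have hy1 : y ∈ ball (0 : ℂ) 1 := by rwa [← eball_ofReal, ENNReal.ofReal_one]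
  have hlim : Tendsto (fun N => ∑ k ∈ Finset.range N, p k fun _ => y) atTop (𝓝 (f y)) := by
    simpa [hp] using h y (mem_ball_zero_iff.1 hy1)
  simp only [zero_add] at hsum ⊢
  rwa [tendsto_nhds_unique hsum.tendsto_sum_nat hlim] at hsum

theorem norm_coeff_le_of_tendsto [CompleteSpace F] {c : ℕ → F} {f : ℂ → F} {C : ℝ}
    (h : ∀ z : ℂ, ‖z‖ < 1 → Tendsto (fun N => ∑ k ∈ Finset.range N, z ^ k • c k) atTop (𝓝 (f z)))
    (hC : ∀ z : ℂ, ‖z‖ < 1 → ‖f z‖ ≤ C) (k : ℕ) : ‖c k‖ ≤ C := by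
  have hf := hasFPowerSeriesOnBall_of_tendsto h
  have hd : DifferentiableOn ℂ f (ball 0 1) := by
    rw [← eball_ofReal, ENNReal.ofReal_one]
    exact hf.differentiableOn
  have hcoeff : iteratedDeriv k f 0 = (k.factorial : ℂ) • c k := by
    have := hf.factorial_smul 1 k
    simpa [iteratedDeriv_eq_iteratedFDeriv, Nat.cast_smul_eq_nsmul] using this.symm
  refine le_of_forall_mul_pow_le k fun r ⟨hr0, hr1⟩ => ?_
  have hcauchy := Complex.norm_iteratedDeriv_le_of_forall_mem_sphere_norm_le k hr0
    (hd.mono (by simpa [closure_ball _ hr0.ne'] using closedBall_subset_ball hr1)).diffContOnCl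
    fun z hz => hC z (by simpa [mem_sphere_zero_iff_norm.1 hz] using hr1)
  rw [hcoeff, norm_smul, Complex.norm_natCast, mul_div_assoc,
    mul_le_mul_iff_right₀ (by positivity), le_div_iff₀ (by positivity)] at hcauchy
  exact hcauchy

theorem norm_fderiv_le_div_of_forall_mem_ball_norm_le {f : E → F} {c : E} {R C : ℝ} (hR : 0 < R)
    (hd : DifferentiableOn ℂ f (ball c R)) (hC : ∀ x ∈ ball c R, ‖f x‖ ≤ C) :
    ‖fderiv ℂ f c‖ ≤ C / R := by
  have hC0 : 0 ≤ C := (norm_nonneg _).trans (hC c (mem_ball_self hR))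
  refine ContinuousLinearMap.opNorm_le_of_unit_norm (by positivity) fun v hv => ?_
  rw [le_div_iff₀ hR]
  refine le_of_forall_mul_pow_le 1 fun r ⟨hr0, hr1⟩ => ?_
  have hline : ∀ t : ℂ, ‖t‖ ≤ R * r → c + t • v ∈ ball c R := fun t ht => by
    rw [mem_ball_iff_norm, add_sub_cancel_left, norm_smul, hv, mul_one]
    exact ht.trans_lt (mul_lt_of_lt_one_right hR hr1)
  have hcauchy := Complex.norm_deriv_le_of_forall_mem_sphere_norm_le
    (f := fun t : ℂ => f (c + t • v)) (c := 0) (C := C) (mul_pos hR hr0)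
    (DifferentiableOn.diffContOnCl <| by
      rw [closure_ball _ (mul_pos hR hr0).ne']
      exact hd.comp (by fun_prop) fun t ht => hline t (by simpa using ht))
    fun t ht => hC _ (hline t (mem_sphere_zero_iff_norm.1 ht).le)
  have hderiv : deriv (fun t : ℂ => f (c + t • v)) 0 = fderiv ℂ f c v :=
    (hd.differentiableAt (ball_mem_nhds c hR)).lineDeriv_eq_fderiv
  rwa [hderiv, le_div_iff₀ (mul_pos hR hr0), ← mul_assoc, ← pow_one r] at hcauchy

/-- `HasHomogeneousExpansion p f` says that `f = ∑ₖ pₖ` pointwise on the open unit ball, with `pₖ`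
holomorphic and homogeneous of degree `k`; the series is summed in the order of the degrees. -/
structure HasHomogeneousExpansion (p : ℕ → E → F) (f : E → F) : Prop where
  differentiable : ∀ k, Differentiable ℂ (p k)
  map_smul : ∀ k (z : ℂ) x, p k (z • x) = z ^ k • p k x
  tendsto : ∀ x ∈ ball (0 : E) 1, Tendsto (fun N => ∑ k ∈ Finset.range N, p k x) atTop (𝓝 (f x))

namespace HasHomogeneousExpansion

variable {p : ℕ → E → F} {f : E → F} {C : ℝ}

theorem tendsto_slice (hf : HasHomogeneousExpansion p f) {x : E} (hx : ‖x‖ ≤ 1) (z : ℂ)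
    (hz : ‖z‖ < 1) :
    Tendsto (fun N => ∑ k ∈ Finset.range N, z ^ k • p k x) atTop (𝓝 (f (z • x))) := by
  simp only [← hf.map_smul]
  exact hf.tendsto _ (mapsTo_smul_ball hx (mem_ball_zero_iff.2 hz))

theorem apply_zero (hf : HasHomogeneousExpansion p f) : f 0 = p 0 0 := by
  refine tendsto_nhds_unique (hf.tendsto 0 (mem_ball_self one_pos)) ?_
  refine tendsto_const_nhds.congr' ?_
  filter_upwards [eventually_ge_atTop 1] with N hN
  have hvanish : ∀ k ∈ Finset.range N, k ≠ 0 → p k 0 = 0 := fun k _ hk => by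
    simpa [zero_pow hk] using hf.map_smul k 0 0
  exact (Finset.sum_eq_single_of_mem 0 (Finset.mem_range.2 hN) hvanish).symm

variable [CompleteSpace F]

theorem norm_le (hf : HasHomogeneousExpansion p f) (hC : ∀ x ∈ ball (0 : E) 1, ‖f x‖ ≤ C)
    (k : ℕ) (x : E) : ‖p k x‖ ≤ C * ‖x‖ ^ k := by
  obtain ⟨u, hu, hx⟩ := exists_norm_le_one_ofReal_norm_smul_eq x
  have hpu : ‖p k u‖ ≤ C := norm_coeff_le_of_tendsto (hf.tendsto_slice hu)
    (fun z hz => hC _ (mapsTo_smul_ball hu (mem_ball_zero_iff.2 hz))) k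
  calc ‖p k x‖ = ‖p k u‖ * ‖x‖ ^ k := by
        conv_lhs => rw [← hx, hf.map_smul]
        simp [norm_smul, mul_comm]
    _ ≤ C * ‖x‖ ^ k := by gcongr

theorem differentiableOn (hf : HasHomogeneousExpansion p f)
    (hC : ∀ x ∈ ball (0 : E) 1, ‖f x‖ ≤ C) : DifferentiableOn ℂ f (ball 0 1) := by
  intro y hy
  obtain ⟨r, hyr, hr1⟩ := exists_between (mem_ball_zero_iff.1 hy)
  obtain ⟨s, hrs, hs1⟩ := exists_between hr1
  have hr0 : 0 < r := (norm_nonneg y).trans_lt hyr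
  have hC0 : 0 ≤ C := (norm_nonneg _).trans (hC y hy)
  have hsum : ∀ x ∈ ball (0 : E) 1, HasSum (fun k => p k x) (f x) := fun x hx => by
    have hsummable : Summable fun k => p k x := .of_norm_bounded
      ((summable_geometric_of_lt_one (norm_nonneg x) (mem_ball_zero_iff.1 hx)).mul_left C)
      (hf.norm_le hC · x)
    exact (hsummable.hasSum_iff_tendsto_nat).2 (hf.tendsto x hx)
  have hfderiv : ∀ k, ∀ x ∈ ball (0 : E) r, ‖fderiv ℂ (p k) x‖ ≤ C * s ^ k / (s - r) := by
    refine fun k x hx => norm_fderiv_le_div_of_forall_mem_ball_norm_le (sub_pos.2 hrs)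
      (hf.differentiable k).differentiableOn fun w hw => (hf.norm_le hC k w).trans ?_
    have hws : ‖w‖ ≤ s := by
      rw [mem_ball_zero_iff] at hx
      rw [mem_ball_iff_norm] at hw
      linarith [norm_le_norm_add_norm_sub' w x]
    gcongr
  have hbound : Summable fun k => C * s ^ k / (s - r) :=
    ((summable_geometric_of_lt_one (hr0.trans hrs).le hs1).mul_left C).div_const _
  have htsum := hasFDerivAt_tsum_of_isPreconnected hbound isOpen_ball
    (convex_ball 0 r).isPreconnected
    (fun k x _ => (hf.differentiable k x).hasFDerivAt) hfderiv (mem_ball_self hr0)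
    (hsum 0 (mem_ball_self one_pos)).summable (mem_ball_zero_iff.2 hyr)
  have heq : f =ᶠ[𝓝 y] fun x => ∑' k, p k x := by
    filter_upwards [isOpen_ball.mem_nhds hy] with x hx using (hsum x hx).tsum_eq.symm
  exact (htsum.congr_of_eventuallyEq heq).differentiableAt.differentiableWithinAt

theorem fderiv_zero_apply (hf : HasHomogeneousExpansion p f) (hd : DifferentiableAt ℂ f 0)
    (x : E) : fderiv ℂ f 0 x = p 1 x := by
  obtain ⟨u, hu, hx⟩ := exists_norm_le_one_ofReal_norm_smul_eq x
  have hseries := (hasFPowerSeriesOnBall_of_tendsto (hf.tendsto_slice hu)).hasFPowerSeriesAt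
  have hslice : deriv (fun z : ℂ => f (z • u)) 0 = fderiv ℂ f 0 u := by
    simpa [lineDeriv] using hd.lineDeriv_eq_fderiv (v := u)
  have hu1 : fderiv ℂ f 0 u = p 1 u := by
    rw [← hslice, hseries.deriv]
    simp
  rw [← hx, ContinuousLinearMap.map_smul, hu1, hf.map_smul, pow_one]

end HasHomogeneousExpansion

theorem norm_one_sub_conj_mul_sq_sub_norm_sub_sq (w z : ℂ) :
    ‖1 - conj w * z‖ ^ 2 - ‖z - w‖ ^ 2 = (1 - ‖w‖ ^ 2) * (1 - ‖z‖ ^ 2) := by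
  simp only [← Complex.normSq_eq_norm_sq, Complex.normSq_apply, Complex.sub_re, Complex.sub_im,
    Complex.mul_re, Complex.mul_im, Complex.conj_re, Complex.conj_im, Complex.one_re,
    Complex.one_im]
  ring

theorem norm_sub_lt_norm_one_sub_conj_mul {w z : ℂ} (hw : ‖w‖ < 1) (hz : ‖z‖ < 1) :
    ‖z - w‖ < ‖1 - conj w * z‖ := by
  rw [← sq_lt_sq₀ (norm_nonneg _) (norm_nonneg _), ← sub_pos,
    norm_one_sub_conj_mul_sq_sub_norm_sub_sq]
  exact mul_pos (by nlinarith [norm_nonneg w]) (by nlinarith [norm_nonneg z])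

theorem norm_deriv_le_one_sub_norm_sq {f : ℂ → ℂ} (hd : DifferentiableOn ℂ f (ball 0 1))
    (hmaps : MapsTo f (ball 0 1) (ball 0 1)) : ‖deriv f 0‖ ≤ 1 - ‖f 0‖ ^ 2 := by
  set w := f 0 with hw_def
  have hw : ‖w‖ < 1 := by simpa using hmaps (mem_ball_self one_pos)
  have hmobius : ∀ z ∈ ball (0 : ℂ) 1, ‖f z - w‖ < ‖1 - conj w * f z‖ := fun z hz =>
    norm_sub_lt_norm_one_sub_conj_mul hw (mem_ball_zero_iff.1 (hmaps hz))
  have hden : ∀ z ∈ ball (0 : ℂ) 1, 1 - conj w * f z ≠ 0 := fun z hz =>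
    norm_pos_iff.1 ((norm_nonneg _).trans_lt (hmobius z hz))
  set g : ℂ → ℂ := fun z => (f z - w) / (1 - conj w * f z) with hg_def
  have hgd : DifferentiableOn ℂ g (ball 0 1) :=
    (hd.sub_const w).div ((hd.const_mul _).const_sub 1) hden
  have hgmaps : MapsTo g (ball 0 1) (closedBall (g 0) 1) := fun z hz => by
    have hg0 : g 0 = 0 := by simp [hg_def, ← hw_def]
    rw [hg0, mem_closedBall_zero_iff, norm_div]
    exact div_le_one_of_le₀ (hmobius z hz).le (norm_nonneg _)
  have hpos : 0 < 1 - ‖w‖ ^ 2 := by nlinarith [norm_nonneg w]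
  have hderiv : deriv g 0 = deriv f 0 / ((1 - ‖w‖ ^ 2 : ℝ) : ℂ) := by
    have hf := (hd.differentiableAt (ball_mem_nhds 0 one_pos)).hasDerivAt
    have hg : HasDerivAt g _ 0 := (hf.sub_const w).div ((hf.const_mul (conj w)).const_sub 1)
      (hden 0 (mem_ball_self one_pos))
    have hden0 : 1 - conj w * w = ((1 - ‖w‖ ^ 2 : ℝ) : ℂ) := by simp [Complex.conj_mul']
    have hden0_ne : ((1 - ‖w‖ ^ 2 : ℝ) : ℂ) ≠ 0 := by exact_mod_cast hpos.ne'
    rw [hg.deriv, ← hw_def, sub_self, zero_mul, sub_zero, hden0]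
    field_simp
  have hschwarz := Complex.norm_deriv_le_one_of_mapsTo_ball hgd hgmaps one_pos
  rwa [hderiv, norm_div, Complex.norm_real, Real.norm_of_nonneg hpos.le, div_le_one hpos]
    at hschwarz

theorem apply_zero_eq_zero_of_hasFDerivAt_id {f : E → E} (hd : DifferentiableOn ℂ f (ball 0 1))
    (hmaps : MapsTo f (ball 0 1) (ball 0 1)) (hf : HasFDerivAt f (.id ℂ E) 0) : f 0 = 0 := by
  by_contra hc
  -- Along the complex line through `f 0`, the function `l ∘ f` has derivative `1` at the origin, so
  -- the Schwarz–Pick inequality leaves no room for a nonzero value there.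
  obtain ⟨l, hl, hlc⟩ := exists_dual_vector ℂ (f 0) (norm_ne_zero_iff.2 hc)
  obtain ⟨u, hu, huc⟩ := exists_norm_le_one_ofReal_norm_smul_eq (f 0)
  have hlu : l u = 1 := by
    rw [← huc, map_smul, smul_eq_mul] at hlc
    exact mul_left_cancel₀ (by simpa using hc) (hlc.trans (by simp [huc]))
  have hderiv : HasDerivAt (fun z : ℂ => l (f (z • u))) 1 0 := by
    have hline : HasDerivAt (fun z : ℂ => z • u) u 0 := by
      simpa using (hasDerivAt_id (0 : ℂ)).smul_const u
    have h := l.hasFDerivAt.comp_hasDerivAt (0 : ℂ)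
      ((show HasFDerivAt f (.id ℂ E) ((0 : ℂ) • u) by rwa [zero_smul]).comp_hasDerivAt 0 hline)
    rwa [ContinuousLinearMap.id_apply, hlu] at h
  have hpick := norm_deriv_le_one_sub_norm_sq (f := fun z : ℂ => l (f (z • u)))
    (l.differentiable.comp_differentiableOn (hd.comp (by fun_prop) (mapsTo_smul_ball hu)))
    fun z hz => by
      rw [mem_ball_zero_iff]
      exact ((l.le_opNorm _).trans (by rw [hl, one_mul])).trans_lt
        (mem_ball_zero_iff.1 (hmaps (mapsTo_smul_ball hu hz)))
  simp only [hderiv.deriv, zero_smul, hlc, norm_one, RCLike.norm_ofReal, abs_norm] at hpick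
  nlinarith [norm_pos_iff.2 hc]

theorem norm_sub_id_le_two_mul_sq_of_hasFDerivAt_id {g : E → E}
    (hd : DifferentiableOn ℂ g (ball 0 1)) (hmaps : MapsTo g (ball 0 1) (closedBall 0 1))
    (hg0 : g 0 = 0) (hg : HasFDerivAt g (.id ℂ E) 0) {y : E} (hy : y ∈ ball (0 : E) 1) :
    ‖g y - y‖ ≤ 2 * ‖y‖ ^ 2 := by
  have hlittleO : (fun x => (g x - x) - (g 0 - 0)) =o[𝓝 0] fun x => ‖x - 0‖ ^ 1 := by
    simpa [hg0] using hg.isLittleO.norm_right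
  have hbound : MapsTo (fun x => g x - x) (ball 0 1) (closedBall (g 0 - 0) 2) := fun x hx => by
    rw [hg0, sub_zero, mem_closedBall_zero_iff]
    linarith [norm_sub_le (g x) x, mem_closedBall_zero_iff.1 (hmaps hx), mem_ball_zero_iff.1 hx]
  simpa [hg0] using Complex.dist_le_mul_div_pow_of_mapsTo_ball_of_isLittleO
    (hd.sub differentiableOn_id) hbound hlittleO hy

theorem norm_sub_le_two_mul_norm_sub_of_hasFDerivAt_id {g : E → E}
    (hd : DifferentiableOn ℂ g (ball 0 1)) (hmaps : MapsTo g (ball 0 1) (closedBall 0 1))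
    (hg0 : g 0 = 0) (hg : HasFDerivAt g (.id ℂ E) 0)
    {u v : E} (hu : u ∈ ball (0 : E) (1 / 16)) (hv : v ∈ ball (0 : E) (1 / 16)) :
    ‖u - v‖ ≤ 2 * ‖g u - g v‖ := by
  have hd_sub : DifferentiableOn ℂ (fun y => g y - y) (ball 0 1) := hd.sub differentiableOn_id
  have hfderiv : ∀ x ∈ ball (0 : E) (1 / 16), ‖fderiv ℂ (fun y => g y - y) x‖ ≤ 1 / 2 := by
    intro x hx
    rw [mem_ball_zero_iff] at hx
    have hsubset : ∀ y ∈ ball x (1 / 16), ‖y‖ < 1 / 8 := fun y hy => by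
      linarith [norm_le_norm_add_norm_sub' y x, mem_ball_iff_norm.1 hy]
    have hcauchy := norm_fderiv_le_div_of_forall_mem_ball_norm_le
      (f := fun y => g y - y) (c := x) (R := 1 / 16) (C := 1 / 32) (by norm_num)
      (hd_sub.mono fun y hy => mem_ball_zero_iff.2 ((hsubset y hy).trans (by norm_num)))
      fun y hy => by
        have hquad := norm_sub_id_le_two_mul_sq_of_hasFDerivAt_id hd hmaps hg0 hg
          (mem_ball_zero_iff.2 ((hsubset y hy).trans (by norm_num)))
        nlinarith [hsubset y hy, norm_nonneg y]
    linarith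
  have hlip := (convex_ball (0 : E) (1 / 16)).norm_image_sub_le_of_norm_fderiv_le
    (fun x hx => hd_sub.differentiableAt (isOpen_ball.mem_nhds (ball_subset_ball (by norm_num) hx)))
    hfderiv hu hv
  have htriangle : ‖v - u‖ ≤ ‖g v - g u‖ + ‖g v - v - (g u - u)‖ := by
    rw [show v - u = g v - g u - (g v - v - (g u - u)) by abel]
    exact norm_sub_le _ _
  rw [norm_sub_rev u v, norm_sub_rev (g u)]
  linarith

section Iteration

variable {f : E → E}

theorem mapsTo_birkhoffAverage_id {s : Set E} (hs : Convex ℝ s) (hf : MapsTo f s s) {N : ℕ}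
    (hN : N ≠ 0) : MapsTo (birkhoffAverage ℂ f id N) s s := by
  intro x hx
  rw [birkhoffAverage_congr_ring ℂ ℝ, birkhoffAverage, birkhoffSum, Finset.smul_sum]
  exact hs.sum_mem (fun _ _ => by positivity) (by simp [hN]) fun k _ => hf.iterate k hx

theorem differentiableOn_birkhoffAverage_id {s : Set E} (hd : DifferentiableOn ℂ f s)
    (hf : MapsTo f s s) (N : ℕ) : DifferentiableOn ℂ (birkhoffAverage ℂ f id N) s :=
  (DifferentiableOn.fun_sum fun k _ => hd.iterate hf k).const_smul _

theorem hasFDerivAt_birkhoffAverage_id {x : E} (hx : f x = x) (hf : HasFDerivAt f (.id ℂ E) x)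
    {N : ℕ} (hN : N ≠ 0) : HasFDerivAt (birkhoffAverage ℂ f id N) (.id ℂ E) x := by
  have hiterate : ∀ k ∈ Finset.range N, HasFDerivAt (fun y => id (f^[k] y)) (.id ℂ E) x :=
    fun k _ => by simpa [← ContinuousLinearMap.one_def] using hf.iterate hx k
  have hsum := (HasFDerivAt.fun_sum hiterate).const_smul (N : ℂ)⁻¹
  rwa [Finset.sum_const, Finset.card_range, ← Nat.cast_smul_eq_nsmul ℂ,
    inv_smul_smul₀ (Nat.cast_ne_zero.2 hN)] at hsum

/- The Birkhoff averages `A N` of the iterates of `f` map the ball into itself with derivative `id`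
at the fixed point `0`, so they satisfy one common lower Lipschitz bound near `0`; but
`A N (f x) - A N x` is `1 / N` times the bounded quantity `f^[N] x - x`. -/
theorem apply_eq_self_of_hasFDerivAt_id (hd : DifferentiableOn ℂ f (ball 0 1))
    (hmaps : MapsTo f (ball 0 1) (ball 0 1)) (hf : HasFDerivAt f (.id ℂ E) 0) {x : E}
    (hx : x ∈ ball (0 : E) (1 / 16)) : f x = x := by
  have hf0 := apply_zero_eq_zero_of_hasFDerivAt_id hd hmaps hf
  have hx1 : x ∈ ball (0 : E) 1 := ball_subset_ball (by norm_num) hx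
  have hfx : f x ∈ ball (0 : E) (1 / 16) := by
    rw [mem_ball_zero_iff] at hx hx1 ⊢
    exact (Complex.norm_le_norm_of_mapsTo_ball hd (hmaps.mono_right ball_subset_closedBall) hf0
      hx1).trans_lt hx
  have hbounded : Bornology.IsBounded (range fun k => id (f^[k] x)) :=
    isBounded_ball.subset (range_subset_iff.2 fun k => hmaps.iterate k hx1)
  have hlim := (tendsto_birkhoffAverage_apply_sub_birkhoffAverage ℂ hbounded).norm.const_mul 2
  have hle : ∀ᶠ N in atTop, ‖f x - x‖ ≤
      2 * ‖birkhoffAverage ℂ f id N (f x) - birkhoffAverage ℂ f id N x‖ := by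
    filter_upwards [eventually_ne_atTop 0] with N hN
    exact norm_sub_le_two_mul_norm_sub_of_hasFDerivAt_id
      (differentiableOn_birkhoffAverage_id hd hmaps N)
      ((mapsTo_birkhoffAverage_id (convex_ball 0 1) hmaps hN).mono_right ball_subset_closedBall)
      (Function.IsFixedPt.birkhoffAverage_eq ℂ hf0 id (Nat.cast_ne_zero.2 hN))
      (hasFDerivAt_birkhoffAverage_id hf0 hf hN) hfx hx
  rw [norm_zero, mul_zero] at hlim
  exact sub_eq_zero.1 (norm_le_zero_iff.1 (ge_of_tendsto hlim hle))

end Iteration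

theorem eqOn_id_of_hasFDerivAt_id [CompleteSpace E] {f : E → E}
    (hd : DifferentiableOn ℂ f (ball 0 1)) (hmaps : MapsTo f (ball 0 1) (ball 0 1))
    (hf : HasFDerivAt f (.id ℂ E) 0) : EqOn f id (ball 0 1) := by
  intro x hx
  obtain ⟨u, hu, hux⟩ := exists_norm_le_one_ofReal_norm_smul_eq x
  have hslice : AnalyticOnNhd ℂ (fun z : ℂ => f (z • u)) (ball 0 1) :=
    (hd.comp (by fun_prop) (mapsTo_smul_ball hu)).analyticOnNhd isOpen_ball
  have hline : AnalyticOnNhd ℂ (fun z : ℂ => z • u) (ball 0 1) :=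
    DifferentiableOn.analyticOnNhd (by fun_prop) isOpen_ball
  have hlocal : (fun z : ℂ => f (z • u)) =ᶠ[𝓝 0] fun z => z • u := by
    have hcont : Tendsto (fun z : ℂ => z • u) (𝓝 0) (𝓝 0) := by
      simpa using (show Continuous fun z : ℂ => z • u by fun_prop).tendsto 0
    filter_upwards [hcont (ball_mem_nhds 0 (by norm_num : (0 : ℝ) < 1 / 16))] with z hz
    exact apply_eq_self_of_hasFDerivAt_id hd hmaps hf hz
  have hglobal := hslice.eqOn_of_preconnected_of_eventuallyEq hline
    (convex_ball 0 1).isPreconnected (mem_ball_self one_pos) hlocal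
    (show (‖x‖ : ℂ) ∈ ball (0 : ℂ) 1 by simpa using hx)
  simpa only [hux, id_eq] using hglobal

theorem eqOn_of_hasFDerivAt_linearIsometryEquiv [CompleteSpace E] {f : E → F} {L : E ≃ₗᵢ[ℂ] F}
    (hd : DifferentiableOn ℂ f (ball 0 1)) (hmaps : MapsTo f (ball 0 1) (ball 0 1))
    (hf : HasFDerivAt f (L.toContinuousLinearEquiv : E →L[ℂ] F) 0) : EqOn f L (ball 0 1) := by
  intro x hx
  have hderiv : HasFDerivAt (L.symm ∘ f) (.id ℂ E) 0 := by
    simpa using L.symm.toContinuousLinearEquiv.hasFDerivAt.comp (0 : E) hf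
  have h := eqOn_id_of_hasFDerivAt_id (L.symm.differentiable.comp_differentiableOn hd)
    (fun y hy => by simpa using hmaps hy) hderiv hx
  simpa using congrArg L h

end BanachSpaces

namespace NC

section RowOperators

variable {H : Type*} [NormedAddCommGroup H] [InnerProductSpace ℂ H] {n m p : ℕ}

/-- The row operator `[X₁,…,Xₙ] : H⁽ⁿ⁾ → H` of a tuple. -/
def rowMap : (Fin n → H →L[ℂ] H) →L[ℂ] PiLp 2 (fun _ : Fin n => H) →L[ℂ] H :=
  ∑ i, (ContinuousLinearMap.compL ℂ (PiLp 2 fun _ : Fin n => H) H H).flip (PiLp.proj 2 _ i) ∘L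
    ContinuousLinearMap.proj i

theorem rowMap_apply (X : Fin n → H →L[ℂ] H) (x : PiLp 2 fun _ : Fin n => H) :
    rowMap X x = ∑ i, X i (x i) := by
  simp [rowMap, _root_.sum_apply]

/-- The Banach space of row operators `H⁽ⁿ⁾ → H`. It is not reducible, so that its normed space
structure is found directly and not through the one of `PiLp`. -/
def RowOperators (n : ℕ) (H : Type*) [NormedAddCommGroup H] [InnerProductSpace ℂ H] : Type _ :=
  PiLp 2 (fun _ : Fin n => H) →L[ℂ] H

instance : NormedAddCommGroup (RowOperators n H) :=
  inferInstanceAs (NormedAddCommGroup (PiLp 2 (fun _ : Fin n => H) →L[ℂ] H))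

instance : NormedSpace ℂ (RowOperators n H) :=
  inferInstanceAs (NormedSpace ℂ (PiLp 2 (fun _ : Fin n => H) →L[ℂ] H))

instance [CompleteSpace H] : CompleteSpace (RowOperators n H) :=
  inferInstanceAs (CompleteSpace (PiLp 2 (fun _ : Fin n => H) →L[ℂ] H))

/-- The identification of tuples with row operators; tuples carry the supremum norm, so this is a
homeomorphism but not an isometry. -/
def rowOp : (Fin n → H →L[ℂ] H) ≃L[ℂ] RowOperators n H where
  toFun := rowMap
  invFun T i := T ∘L (PiLp.continuousLinearEquiv 2 ℂ fun _ : Fin n => H).symm ∘L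
    ContinuousLinearMap.single ℂ (fun _ : Fin n => H) i
  map_add' := map_add rowMap
  map_smul' := map_smul rowMap
  left_inv X := by
    ext i x
    simp [rowMap_apply, apply_ite]
  right_inv T := by
    refine ContinuousLinearMap.ext fun x => ?_
    rw [rowMap_apply]
    let S : PiLp 2 (fun _ : Fin n => H) →L[ℂ] H := T
    change ∑ i, S (PiLp.single 2 i (x i)) = S x
    rw [← map_sum]
    congr 1
    ext i
    simp
  continuous_toFun := rowMap.continuous
  continuous_invFun := by fun_prop

/-- The map of row operators induced by a map of tuples. -/
def onRowOps (F : (Fin n → H →L[ℂ] H) → Fin m → H →L[ℂ] H) (T : RowOperators n H) :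
    RowOperators m H :=
  rowOp (F (rowOp.symm T))

/-- The linear substitution `X ↦ [X₁,…,Xₙ]Aᵗ`. -/
def linSubst (A : Matrix (Fin m) (Fin n) ℂ) :
    (Fin n → H →L[ℂ] H) →L[ℂ] (Fin m → H →L[ℂ] H) :=
  ContinuousLinearMap.pi fun j => ∑ i, A j i • ContinuousLinearMap.proj i

theorem linSubst_apply (A : Matrix (Fin m) (Fin n) ℂ) (X : Fin n → H →L[ℂ] H) (j : Fin m) :
    linSubst A X j = ∑ i, A j i • X i := by
  simp [linSubst, _root_.sum_apply]

theorem linSubst_linSubst (A : Matrix (Fin m) (Fin n) ℂ) (B : Matrix (Fin n) (Fin p) ℂ)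
    (X : Fin p → H →L[ℂ] H) : linSubst A (linSubst B X) = linSubst (A * B) X := by
  funext j
  simp only [linSubst_apply, Matrix.mul_apply, Finset.smul_sum, Finset.sum_smul, smul_smul]
  exact Finset.sum_comm

theorem linSubst_one (X : Fin n → H →L[ℂ] H) : linSubst 1 X = X := by
  funext j
  simp [linSubst_apply, Matrix.one_apply]

theorem linSubst_smul_one (A : Matrix (Fin m) (Fin n) ℂ) (v : EuclideanSpace ℂ (Fin n)) :
    linSubst A (fun i => v i • (1 : H →L[ℂ] H)) = fun j => Matrix.toEuclideanLin A v j • 1 := by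
  funext j
  simp [linSubst_apply, Matrix.toLpLin_apply, Matrix.mulVec, dotProduct, Finset.sum_smul, smul_smul]

theorem wordProd_smul (z : ℂ) (X : Fin n → H →L[ℂ] H) (w : List (Fin n)) :
    wordProd (z • X) w = z ^ w.length • wordProd X w := by
  unfold wordProd
  induction w with
  | nil => simp
  | cons i w ih =>
    simp only [List.map_cons, List.prod_cons, ih, List.length_cons, Pi.smul_apply]
    rw [smul_mul_smul_comm, pow_succ']

theorem differentiable_wordProd (w : List (Fin n)) :
    Differentiable ℂ fun X : Fin n → H →L[ℂ] H => wordProd X w := by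
  induction w with
  | nil => exact differentiable_const 1
  | cons i w ih => exact (differentiable_apply i).mul ih

theorem homog_smul (a : List (Fin n) → ℂ) (z : ℂ) (X : Fin n → H →L[ℂ] H) (k : ℕ) :
    homog a (z • X) k = z ^ k • homog a X k := by
  simp only [homog, wordProd_smul, List.length_ofFn, Finset.smul_sum, smul_comm (z ^ k)]

theorem differentiable_homog (a : List (Fin n) → ℂ) (k : ℕ) :
    Differentiable ℂ fun X : Fin n → H →L[ℂ] H => homog a X k := by
  have hword := differentiable_wordProd (H := H) (n := n)
  unfold homog
  fun_prop

theorem homog_degree_zero (a : List (Fin n) → ℂ) (X : Fin n → H →L[ℂ] H) :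
    homog a X 0 = a [] • 1 := by
  simp [homog, wordProd]

theorem homog_degree_one (a : List (Fin n) → ℂ) (X : Fin n → H →L[ℂ] H) :
    homog a X 1 = ∑ i, a [i] • X i := by
  rw [homog, ← (Equiv.funUnique (Fin 1) (Fin n)).symm.sum_comp]
  simp [wordProd]

theorem homog_degree_one_eq_linSubst (a : Fin m → List (Fin n) → ℂ) (X : Fin n → H →L[ℂ] H) :
    (fun j => homog (a j) X 1) = linSubst (Matrix.of fun j i => a j [i]) X := by
  funext j
  rw [homog_degree_one, linSubst_apply]
  rfl

end RowOperators

section RowNorm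

variable {H : Type*} [NormedAddCommGroup H] [InnerProductSpace ℂ H] [CompleteSpace H] {n m : ℕ}

theorem adjoint_rowMap_apply (X : Fin n → H →L[ℂ] H) (h : H) :
    ContinuousLinearMap.adjoint (rowMap X) h
      = WithLp.toLp 2 fun i => ContinuousLinearMap.adjoint (X i) h := by
  refine ext_inner_right ℂ fun y => ?_
  rw [ContinuousLinearMap.adjoint_inner_left, rowMap_apply, PiLp.inner_apply, inner_sum]
  simp [ContinuousLinearMap.adjoint_inner_left]

theorem rowNorm_eq_norm_rowMap (X : Fin n → H →L[ℂ] H) : rowNorm X = ‖rowMap X‖ := by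
  have hsum : ∑ i, X i * ContinuousLinearMap.adjoint (X i)
      = rowMap X ∘L ContinuousLinearMap.adjoint (rowMap X) := by
    ext h
    simp [rowMap_apply, adjoint_rowMap_apply, _root_.sum_apply]
  have hstar := ContinuousLinearMap.norm_adjoint_comp_self (ContinuousLinearMap.adjoint (rowMap X))
  rw [ContinuousLinearMap.adjoint_adjoint] at hstar
  rw [rowNorm, hsum, hstar, LinearIsometryEquiv.norm_map, Real.sqrt_mul_self (norm_nonneg _)]

theorem norm_rowOp (X : Fin n → H →L[ℂ] H) : ‖rowOp X‖ = rowNorm X :=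
  (rowNorm_eq_norm_rowMap X).symm

theorem rowOp_mem_ball {X : Fin n → H →L[ℂ] H} {r : ℝ} :
    rowOp X ∈ Metric.ball 0 r ↔ X ∈ ball n H r := by
  rw [mem_ball_zero_iff, norm_rowOp]
  rfl

theorem rowOp_symm_mem_ball {T : RowOperators n H} {r : ℝ} :
    rowOp.symm T ∈ ball n H r ↔ T ∈ Metric.ball 0 r := by
  rw [← rowOp_mem_ball, rowOp.apply_symm_apply]

theorem mapsTo_onRowOps {F : (Fin n → H →L[ℂ] H) → Fin m → H →L[ℂ] H} {r s : ℝ}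
    (hF : Set.MapsTo F (ball n H r) (ball m H s)) :
    Set.MapsTo (onRowOps F) (Metric.ball 0 r) (Metric.ball 0 s) := fun _ hT =>
  rowOp_mem_ball.2 (hF (rowOp_symm_mem_ball.2 hT))

theorem rowNorm_smul_one [Nontrivial H] (v : EuclideanSpace ℂ (Fin n)) :
    rowNorm (fun i => v i • (1 : H →L[ℂ] H)) = ‖v‖ := by
  have hsum : ∑ i, (v i • (1 : H →L[ℂ] H)) * ContinuousLinearMap.adjoint (v i • (1 : H →L[ℂ] H))
      = ((∑ i, ‖v i‖ ^ 2 : ℝ) : ℂ) • (1 : H →L[ℂ] H) := by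
    simp only [← ContinuousLinearMap.star_eq_adjoint, star_smul, star_one, smul_mul_smul_comm,
      one_mul, ← Finset.sum_smul]
    push_cast
    simp only [← Complex.mul_conj', starRingEnd_apply]
  rw [rowNorm, hsum, norm_smul, norm_one, mul_one, Complex.norm_real,
    Real.norm_of_nonneg (by positivity), EuclideanSpace.norm_eq]

theorem rowNorm_linSubst_of_mem_unitaryGroup {U : Matrix (Fin n) (Fin n) ℂ}
    (hU : U ∈ Matrix.unitaryGroup (Fin n) ℂ) (X : Fin n → H →L[ℂ] H) :
    rowNorm (linSubst U X) = rowNorm X := by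
  have hUU : ∀ i k, ∑ j, U j i * star (U j k) = if i = k then 1 else 0 := fun i k => by
    have h := congrFun (congrFun (Matrix.mem_unitaryGroup_iff'.1 hU) k) i
    simpa only [Matrix.mul_apply, Matrix.star_apply, Matrix.one_apply, mul_comm, eq_comm] using h
  have hsum : ∑ j, linSubst U X j * star (linSubst U X j) = ∑ i, X i * star (X i) := by
    simp only [linSubst_apply, star_sum, star_smul, Finset.sum_mul_sum, smul_mul_smul_comm]
    rw [Finset.sum_comm]
    refine Finset.sum_congr rfl fun i _ => ?_
    rw [Finset.sum_comm]
    simp only [← Finset.sum_smul, hUU]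
    simp
  simp only [rowNorm, ← ContinuousLinearMap.star_eq_adjoint, hsum]

theorem mapsTo_linSubst_of_mem_unitaryGroup {U : Matrix (Fin n) (Fin n) ℂ}
    (hU : U ∈ Matrix.unitaryGroup (Fin n) ℂ) (r : ℝ) :
    Set.MapsTo (linSubst U) (ball n H r) (ball n H r) := fun X hX =>
  (rowNorm_linSubst_of_mem_unitaryGroup hU X).trans_lt hX

theorem isFreeHoloMap_linSubst (γ : ℝ) (A : Matrix (Fin m) (Fin n) ℂ) :
    IsFreeHoloMap γ (linSubst A : (Fin n → H →L[ℂ] H) → Fin m → H →L[ℂ] H) := by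
  refine fun j => ⟨fun | [i] => A j i | _ => 0, fun X _ => ?_⟩
  refine tendsto_const_nhds.congr' ?_
  filter_upwards [eventually_ge_atTop 2] with N hN
  rw [Finset.sum_eq_single_of_mem 1 (Finset.mem_range.2 hN), homog_degree_one, linSubst_apply]
  refine fun k _ hk => Finset.sum_eq_zero fun w _ => ?_
  have hlength : (List.ofFn w).length ≠ 1 := by simpa using hk
  generalize List.ofFn w = l at hlength ⊢
  match l, hlength with
  | [], _ => simp
  | _ :: _ :: _, _ => simp

end RowNorm

section FreeHolomorphic

variable {H : Type*} [NormedAddCommGroup H] [InnerProductSpace ℂ H] [CompleteSpace H] {n m : ℕ}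
  {F : (Fin n → H →L[ℂ] H) → Fin m → H →L[ℂ] H} {a : Fin m → List (Fin n) → ℂ}

theorem hasHomogeneousExpansion_onRowOps (ha : ∀ j, RepOn 1 (a j) fun X => F X j) :
    HasHomogeneousExpansion (fun k => onRowOps fun X j => homog (a j) X k) (onRowOps F) where
  differentiable k := by
    have hpi : Differentiable ℂ fun (X : Fin n → H →L[ℂ] H) j => homog (a j) X k :=
      differentiable_pi.2 fun j => differentiable_homog (a j) k
    exact rowOp.differentiable.comp (hpi.comp rowOp.symm.differentiable)
  map_smul k z T := by
    simp only [onRowOps, map_smul, homog_smul]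
    exact rowOp.map_smul _ _
  tendsto T hT := by
    have hlim : Tendsto (fun N => ∑ k ∈ Finset.range N, fun j => homog (a j) (rowOp.symm T) k)
        atTop (nhds (F (rowOp.symm T))) :=
      tendsto_pi_nhds.2 fun j => by
        simpa only [Finset.sum_apply] using ha j _ (rowOp_symm_mem_ball.2 hT)
    simpa only [onRowOps, map_sum, Function.comp_def] using (rowOp.continuous.tendsto _).comp hlim

theorem norm_onRowOps_le_one (hmaps : Set.MapsTo F (ball n H 1) (ball m H 1)) :
    ∀ T ∈ Metric.ball 0 1, ‖onRowOps F T‖ ≤ 1 := fun _ hT =>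
  (mem_ball_zero_iff.1 (mapsTo_onRowOps hmaps hT)).le

theorem differentiableOn_onRowOps (ha : ∀ j, RepOn 1 (a j) fun X => F X j)
    (hmaps : Set.MapsTo F (ball n H 1) (ball m H 1)) :
    DifferentiableOn ℂ (onRowOps F) (Metric.ball 0 1) :=
  (hasHomogeneousExpansion_onRowOps ha).differentiableOn (norm_onRowOps_le_one hmaps)

theorem rowNorm_linSubst_le (ha : ∀ j, RepOn 1 (a j) fun X => F X j)
    (hmaps : Set.MapsTo F (ball n H 1) (ball m H 1)) (X : Fin n → H →L[ℂ] H) :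
    rowNorm (linSubst (Matrix.of fun j i => a j [i]) X) ≤ rowNorm X := by
  have h := (hasHomogeneousExpansion_onRowOps ha).norm_le (norm_onRowOps_le_one hmaps) 1 (rowOp X)
  simpa only [onRowOps, homog_degree_one_eq_linSubst, rowOp.symm_apply_apply, one_mul, pow_one,
    norm_rowOp] using h

theorem norm_toEuclideanLin_le_one [Nontrivial H] (ha : ∀ j, RepOn 1 (a j) fun X => F X j)
    (hmaps : Set.MapsTo F (ball n H 1) (ball m H 1)) :
    ‖LinearMap.toContinuousLinearMap
      (Matrix.toEuclideanLin (Matrix.of fun j i => a j [i]))‖ ≤ 1 := by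
  refine ContinuousLinearMap.opNorm_le_bound _ zero_le_one fun v => ?_
  have h := rowNorm_linSubst_le ha hmaps fun i => v i • 1
  rwa [linSubst_smul_one, rowNorm_smul_one, rowNorm_smul_one, ← one_mul ‖v‖] at h

theorem rowNorm_apply_le_of_coeff_nil_eq_zero (ha : ∀ j, RepOn 1 (a j) fun X => F X j)
    (hmaps : Set.MapsTo F (ball n H 1) (ball m H 1)) (h0 : ∀ j, a j [] = 0)
    {X : Fin n → H →L[ℂ] H} (hX : X ∈ ball n H 1) : rowNorm (F X) ≤ rowNorm X := by
  have hzero : onRowOps F 0 = 0 := by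
    rw [(hasHomogeneousExpansion_onRowOps ha).apply_zero]
    simp only [onRowOps, homog_degree_zero, h0, zero_smul]
    exact map_zero rowOp
  have h := Complex.norm_le_norm_of_mapsTo_ball (differentiableOn_onRowOps ha hmaps)
    ((mapsTo_onRowOps hmaps).mono_right Metric.ball_subset_closedBall) hzero
    (mem_ball_zero_iff.1 (rowOp_mem_ball.2 hX))
  simpa only [onRowOps, rowOp.symm_apply_apply, norm_rowOp] using h

/-- The isometry of row operators given by a unitary linear substitution. -/
def unitarySubst (U : Matrix.unitaryGroup (Fin n) ℂ) :
    RowOperators n H ≃ₗᵢ[ℂ] RowOperators n H where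
  toFun := onRowOps (linSubst U.1)
  invFun := onRowOps (linSubst (star U.1))
  map_add' S T := by simp only [onRowOps, map_add]
  map_smul' z T := by simp only [onRowOps, map_smul, RingHom.id_apply]
  left_inv T := by
    simp [onRowOps, linSubst_linSubst, Matrix.mem_unitaryGroup_iff'.1 U.2, linSubst_one]
  right_inv T := by
    simp [onRowOps, linSubst_linSubst, Matrix.mem_unitaryGroup_iff.1 U.2, linSubst_one]
  norm_map' T := by
    change ‖rowOp (linSubst U.1 (rowOp.symm T))‖ = ‖T‖
    rw [norm_rowOp, rowNorm_linSubst_of_mem_unitaryGroup U.2, ← norm_rowOp, rowOp.apply_symm_apply]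

theorem eqOn_linSubst_of_mem_unitaryGroup {G : (Fin n → H →L[ℂ] H) → Fin n → H →L[ℂ] H}
    {b : Fin n → List (Fin n) → ℂ} (hb : ∀ j, RepOn 1 (b j) fun X => G X j)
    (hmaps : Set.MapsTo G (ball n H 1) (ball n H 1))
    (hU : (Matrix.of fun j i => b j [i]) ∈ Matrix.unitaryGroup (Fin n) ℂ) :
    Set.EqOn G (linSubst (Matrix.of fun j i => b j [i])) (ball n H 1) := by
  intro X hX
  have hd := differentiableOn_onRowOps hb hmaps
  have hd0 : DifferentiableAt ℂ (onRowOps G) 0 :=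
    hd.differentiableAt (Metric.ball_mem_nhds 0 one_pos)
  have hfderiv : HasFDerivAt (onRowOps G)
      ((unitarySubst (H := H) ⟨_, hU⟩).toContinuousLinearEquiv : RowOperators n H →L[ℂ] _) 0 := by
    convert hd0.hasFDerivAt using 1
    ext1 T
    rw [(hasHomogeneousExpansion_onRowOps hb).fderiv_zero_apply hd0 T, onRowOps,
      homog_degree_one_eq_linSubst]
    rfl
  have h := eqOn_of_hasFDerivAt_linearIsometryEquiv hd (mapsTo_onRowOps hmaps) hfderiv
    (rowOp_mem_ball.2 hX)
  change onRowOps G (rowOp X) = onRowOps (linSubst _) (rowOp X) at h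
  simpa only [onRowOps, rowOp.symm_apply_apply, EmbeddingLike.apply_eq_iff_eq] using h

theorem isFreeAut_of_eqOn_linSubst {G : (Fin n → H →L[ℂ] H) → Fin n → H →L[ℂ] H}
    {U : Matrix (Fin n) (Fin n) ℂ} (hU : U ∈ Matrix.unitaryGroup (Fin n) ℂ) {γ : ℝ}
    (hG : Set.EqOn G (linSubst U) (ball n H γ)) : IsFreeAut γ G := by
  have hmaps : Set.MapsTo G (ball n H γ) (ball n H γ) :=
    (mapsTo_linSubst_of_mem_unitaryGroup hU γ).congr hG.symm
  have hmaps_star := mapsTo_linSubst_of_mem_unitaryGroup (H := H) (Unitary.star_mem hU) γ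
  refine ⟨fun j => (isFreeHoloMap_linSubst (H := H) γ U j).imp fun c hc X hX => ?_, hmaps,
    linSubst (star U), isFreeHoloMap_linSubst γ (star U), hmaps_star,
    fun X hX => ?_, fun X hX => ?_⟩
  · simpa only [hG hX] using hc X hX
  · rw [hG hX, linSubst_linSubst, Matrix.mem_unitaryGroup_iff'.1 hU, linSubst_one]
  · rw [hG (hmaps_star hX), linSubst_linSubst, Matrix.mem_unitaryGroup_iff.1 hU, linSubst_one]

end FreeHolomorphic

end NC

open NC in
theorem schwarz_lemma_general
    {H : Type*} [NormedAddCommGroup H] [InnerProductSpace ℂ H] [CompleteSpace H] [Nontrivial H]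
    {n m : ℕ}
    (F : (Fin n → H →L[ℂ] H) → Fin m → H →L[ℂ] H)
    (a : Fin m → List (Fin n) → ℂ)
    (ha : ∀ i, RepOn 1 (a i) fun X => F X i)
    (hmaps : Set.MapsTo F (ball n H 1) (ball m H 1)) :
    (Set.MapsTo (fun X => fun j : Fin m => ∑ i, a j [i] • X i)
        (ball n H 1) (ball m H 1)) ∧
    ‖LinearMap.toContinuousLinearMap
        (Matrix.toEuclideanLin (Matrix.of fun (i : Fin m) (j : Fin n) => a i [j]))‖ ≤ 1 ∧
    ((∀ j, a j [] = 0) → ∀ X ∈ ball n H 1, rowNorm (F X) ≤ rowNorm X) ∧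
    (∀ (G : (Fin n → H →L[ℂ] H) → Fin n → H →L[ℂ] H)
        (b : Fin n → List (Fin n) → ℂ),
        (∀ i, RepOn 1 (b i) fun X => G X i) →
        Set.MapsTo G (ball n H 1) (ball n H 1) →
        (Matrix.of fun (i : Fin n) (j : Fin n) => b i [j]) ∈ Matrix.unitaryGroup (Fin n) ℂ →
        IsFreeAut 1 G ∧ ∀ X ∈ ball n H 1, ∀ j, G X j = ∑ i, b j [i] • X i) := by
  refine ⟨fun X hX => ?_, norm_toEuclideanLin_le_one ha hmaps,
    fun h0 X hX => rowNorm_apply_le_of_coeff_nil_eq_zero ha hmaps h0 hX,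
    fun G b hb hG hU => ?_⟩
  · have h := rowNorm_linSubst_le ha hmaps X
    rw [funext (linSubst_apply _ X)] at h
    exact h.trans_lt hX
  · have hlinear := eqOn_linSubst_of_mem_unitaryGroup hb hG hU
    refine ⟨isFreeAut_of_eqOn_linSubst hU hlinear, fun X hX j => ?_⟩
    rw [hlinear hX, linSubst_apply]
    rfl

open NC in
/-- **Schwarz-type lemma for free holomorphic maps.**
For a free holomorphic map `F : [B(H)ⁿ]_1 → [B(H)ᵐ]_1` with coefficients `a`:
(i) `X ↦ [X₁,…,Xₙ]·F'(0)ᵗ` maps `[B(H)ⁿ]_1` into `[B(H)ᵐ]_1`, and `‖F'(0)‖ ≤ 1`;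
(ii) if `F(0) = 0` then `‖F(X)‖ ≤ ‖X‖` on the ball.  Moreover, if `m = n` and `F'(0)` is
a unitary on `ℂⁿ`, then `F` is a free holomorphic automorphism of `[B(H)ⁿ]_1` and
`F(X) = [X₁,…,Xₙ]·[F'(0)]ᵗ`. -/
theorem schwarz_lemma
    {H : Type*} [NormedAddCommGroup H] [InnerProductSpace ℂ H] [CompleteSpace H]
    [TopologicalSpace.SeparableSpace H] (hH : ¬ FiniteDimensional ℂ H)
    {n m : ℕ}
    (F : (Fin n → H →L[ℂ] H) → Fin m → H →L[ℂ] H)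
    (a : Fin m → List (Fin n) → ℂ)
    (ha : ∀ i, RepOn 1 (a i) fun X => F X i)
    (hmaps : Set.MapsTo F (ball n H 1) (ball m H 1)) :
    (Set.MapsTo (fun X => fun j : Fin m => ∑ i, a j [i] • X i)
        (ball n H 1) (ball m H 1)) ∧
    ‖LinearMap.toContinuousLinearMap
        (Matrix.toEuclideanLin (Matrix.of fun (i : Fin m) (j : Fin n) => a i [j]))‖ ≤ 1 ∧
    ((∀ j, a j [] = 0) → ∀ X ∈ ball n H 1, rowNorm (F X) ≤ rowNorm X) ∧
    (∀ (G : (Fin n → H →L[ℂ] H) → Fin n → H →L[ℂ] H)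
        (b : Fin n → List (Fin n) → ℂ),
        (∀ i, RepOn 1 (b i) fun X => G X i) →
        Set.MapsTo G (ball n H 1) (ball n H 1) →
        (Matrix.of fun (i : Fin n) (j : Fin n) => b i [j]) ∈ Matrix.unitaryGroup (Fin n) ℂ →
        IsFreeAut 1 G ∧ ∀ X ∈ ball n H 1, ∀ j, G X j = ∑ i, b j [i] • X i) := by
  have : Nontrivial H := by
    by_contra hsubsingleton
    rw [not_nontrivial_iff_subsingleton] at hsubsingleton
    exact hH inferInstance
  exact schwarz_lemma_general F a ha hmaps
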